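/- Let S be an ordered semigroup satisfying axioms O1–O6. Then the lattice F(S) is distributive: for all functionals λ₁, λ₂, λ₃ on S, λ₁ ∧ (λ₂ ∨ λ₃) = (λ₁ ∧ λ₂) ∨ (λ₁ ∧ λ₃), where ∨ and ∧ denote the least upper bound and greatest lower bound in F(S). -/

import Mathlib

open scoped ENNReal

/-- `CC s t` : `s` is (sequentially) compactly contained in `t`, written `s ≪ t`. -/
def CC {S : Type*} [AddCommMonoid S] [PartialOrder S] (s t : S) : Prop :=
  ∀ u : ℕ → S, Monotone u → ∀ x : S, IsLUB (Set.range u) x → t ≤ x → ∃ n, s ≤ u n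

/-- An ordered semigroup (positive, with translation invariant order) satisfying axioms O1-O5. -/
structure CuO5 (S : Type*) [AddCommMonoid S] [PartialOrder S] : Prop where
  addRightMono : ∀ {s t : S}, s ≤ t → ∀ r : S, s + r ≤ t + r
  zeroLe : ∀ s : S, 0 ≤ s
  O1 : ∀ u : ℕ → S, Monotone u → ∃ x : S, IsLUB (Set.range u) x
  O2 : ∀ s : S, ∃ u : ℕ → S, (∀ n, CC (u n) (u (n + 1))) ∧ IsLUB (Set.range u) s
  O3 : ∀ {s₁ t₁ s₂ t₂ : S}, CC s₁ t₁ → CC s₂ t₂ → CC (s₁ + s₂) (t₁ + t₂)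
  O4 : ∀ u v : ℕ → S, Monotone u → Monotone v → ∀ x y : S,
    IsLUB (Set.range u) x → IsLUB (Set.range v) y →
    IsLUB (Set.range fun n => u n + v n) (x + y)
  O5 : ∀ {s' s t : S}, CC s' s → s ≤ t → ∃ r : S, s' + r ≤ t ∧ t ≤ s + r

/-- Axioms O1-O6. -/
structure CuO6 (S : Type*) [AddCommMonoid S] [PartialOrder S] extends CuO5 S : Prop where
  O6 : ∀ {s r t : S}, s ≤ r + t → ∀ {s' : S}, CC s' s →
    ∃ r' t' : S, s' ≤ r' + t' ∧ r' ≤ r ∧ r' ≤ s ∧ t' ≤ t ∧ t' ≤ s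

/-- A functional on `S`: additive, order preserving, zero preserving map to `[0,∞]`
preserving suprema of increasing sequences. -/
structure IsFunctional {S : Type*} [AddCommMonoid S] [PartialOrder S] (l : S → ℝ≥0∞) : Prop where
  map_zero : l 0 = 0
  map_add : ∀ s t : S, l (s + t) = l s + l t
  mono : ∀ {s t : S}, s ≤ t → l s ≤ l t
  map_sup : ∀ u : ℕ → S, Monotone u → ∀ x : S, IsLUB (Set.range u) x → l x = ⨆ n, l (u n)

/-- Real multiplication on `S` : a map `(0,∞] × S → S` additive, order preserving and
sup-(of increasing sequences)-preserving in each variable, with `1 · s = s`.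
Scalars are elements of `ℝ≥0∞` required to be positive. -/
structure RealMul (S : Type*) [AddCommMonoid S] [PartialOrder S] where
  smul : ℝ≥0∞ → S → S
  add_left : ∀ {a b : ℝ≥0∞}, 0 < a → 0 < b → ∀ s : S, smul (a + b) s = smul a s + smul b s
  add_right : ∀ {a : ℝ≥0∞}, 0 < a → ∀ s t : S, smul a (s + t) = smul a s + smul a t
  mono_left : ∀ {a b : ℝ≥0∞}, 0 < a → a ≤ b → ∀ s : S, smul a s ≤ smul b s
  mono_right : ∀ {a : ℝ≥0∞}, 0 < a → ∀ {s t : S}, s ≤ t → smul a s ≤ smul a t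
  sup_left : ∀ u : ℕ → ℝ≥0∞, Monotone u → 0 < u 0 → ∀ s : S,
    IsLUB (Set.range fun n => smul (u n) s) (smul (⨆ n, u n) s)
  sup_right : ∀ {a : ℝ≥0∞}, 0 < a → ∀ u : ℕ → S, Monotone u → ∀ x : S,
    IsLUB (Set.range u) x → IsLUB (Set.range fun n => smul a (u n)) (smul a x)
  one_smul : ∀ s : S, smul 1 s = s

/-- `D` is a dense subset of `S`: every element of `S` is the supremum of a rapidly
increasing sequence of elements of `D`. -/
def IsDenseSub {S : Type*} [AddCommMonoid S] [PartialOrder S] (D : Set S) : Prop :=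
  ∀ s : S, ∃ u : ℕ → S, (∀ n, u n ∈ D) ∧ (∀ n, CC (u n) (u (n + 1))) ∧ IsLUB (Set.range u) s

/-- `m` is the least upper bound of the functionals `l₁` and `l₂` in `F(S)`
(pointwise order). -/
def IsFSup {S : Type*} [AddCommMonoid S] [PartialOrder S] (l₁ l₂ m : S → ℝ≥0∞) : Prop :=
  IsFunctional m ∧ (∀ s, l₁ s ≤ m s) ∧ (∀ s, l₂ s ≤ m s) ∧
    ∀ d : S → ℝ≥0∞, IsFunctional d → (∀ s, l₁ s ≤ d s) → (∀ s, l₂ s ≤ d s) → ∀ s, m s ≤ d s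

/-- `m` is the greatest lower bound of the functionals `l₁` and `l₂` in `F(S)`
(pointwise order). -/
def IsFInf {S : Type*} [AddCommMonoid S] [PartialOrder S] (l₁ l₂ m : S → ℝ≥0∞) : Prop :=
  IsFunctional m ∧ (∀ s, m s ≤ l₁ s) ∧ (∀ s, m s ≤ l₂ s) ∧
    ∀ d : S → ℝ≥0∞, IsFunctional d → (∀ s, d s ≤ l₁ s) → (∀ s, d s ≤ l₂ s) → ∀ s, d s ≤ m s

/-- An isomorphism of ordered semigroups between `S` and the extended natural numbers. -/
def IsOrdSemigroupIso {S : Type*} [AddCommMonoid S] [PartialOrder S] (e : S ≃ ℕ∞) : Prop :=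
  (∀ a b : S, e (a + b) = e a + e b) ∧ e 0 = 0 ∧ ∀ a b : S, a ≤ b ↔ e a ≤ e b

/-! Fix `x` where the right-hand side is finite. The infimum `f ∧ g` is a lower semicontinuous,
homogenized infimal convolution, so a multiple of `x` is covered by two elements, on one of which
`f` and on the other `g` nearly agrees with `f ∧ g`. Applied to `λ₁ ∧ λ₂` and then to `λ₁ ∧ λ₃`,
this leaves three kinds of pieces: on the first two `λ₁`, hence `λ₁ ∧ (λ₂ ∨ λ₃)`, is nearly
dominated by `λ₁ ∧ λ₂` or by `λ₁ ∧ λ₃`; on the third `λ₂` is close to `λ₁ ∧ λ₂` and `λ₃` to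
`λ₁ ∧ λ₃`, and the formula `(λ₂ ∨ λ₃) z = sup {λ₂ u + λ₃ v | u + v ≤ z}` gives the bound.

Both formulas rest on an approximate Riesz decomposition (`IsGauge.le_splitSup`). Cancellation,
which fails in `S`, is replaced by `n • u + s ≤ n • c + s` (a consequence of `u + s ≤ c + s`) and
division by `n`. -/

section

theorem exists_iSup_le_add {ι : Type*} [Nonempty ι] {φ : ι → ℝ≥0∞} (hφ : ⨆ i, φ i ≠ ⊤)
    {η : ℝ≥0∞} (hη : η ≠ 0) : ∃ i, ⨆ j, φ j ≤ φ i + η := by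
  rcases eq_or_ne (⨆ i, φ i) 0 with h0 | h0
  · exact ⟨Classical.arbitrary ι, h0.trans_le zero_le⟩
  · obtain ⟨i, hi⟩ := lt_iSup_iff.1 (ENNReal.sub_lt_self hφ h0 hη)
    exact ⟨i, tsub_le_iff_right.1 hi.le⟩

theorem le_of_forall_nat_mul_le_add {a b C : ℝ≥0∞} (hC : C ≠ ⊤)
    (h : ∀ n : ℕ, n ≠ 0 → n * a ≤ n * b + C) : a ≤ b := by
  refine ENNReal.le_of_forall_pos_le_add fun ε hε _ => ?_
  have hε' : (ε : ℝ≥0∞) ≠ 0 := by exact_mod_cast hε.ne'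
  obtain ⟨n, hn⟩ := ENNReal.exists_nat_gt (ENNReal.div_ne_top hC hε')
  have hn0 : (n : ℝ≥0∞) ≠ 0 := (zero_le.trans_lt hn).ne'
  have hCn : C ≤ n * ε :=
    (ENNReal.div_le_iff_le_mul (.inl hε') (.inl ENNReal.coe_ne_top)).1 hn.le
  refine (ENNReal.mul_le_mul_iff_right hn0 (ENNReal.natCast_ne_top n)).1 ?_
  calc n * a ≤ n * b + n * ε := (h n (by exact_mod_cast hn0)).trans (by gcongr)
    _ = n * (b + ε) := by ring

section MeetValue

variable {α β : Type*} [LE α] [CompleteLattice β]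

/-- The largest value of `p` on a common lower bound of `a` and `b`: a substitute for
`p (a ⊓ b)` when infima need not exist. -/
def meetValue (p : α → β) (a b : α) : β :=
  ⨆ (v : α) (_ : v ≤ a ∧ v ≤ b), p v

variable {p : α → β} {v a b : α} {B : β}

theorem le_meetValue (ha : v ≤ a) (hb : v ≤ b) : p v ≤ meetValue p a b :=
  le_iSup₂ (f := fun v (_ : v ≤ a ∧ v ≤ b) => p v) v ⟨ha, hb⟩

theorem meetValue_le (h : ∀ v, v ≤ a → v ≤ b → p v ≤ B) : meetValue p a b ≤ B :=
  iSup₂_le fun v hv => h v hv.1 hv.2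

theorem meetValue_comm (p : α → β) (a b : α) : meetValue p a b = meetValue p b a := by
  simp only [meetValue, and_comm]

end MeetValue

variable {S : Type*} [AddCommMonoid S] [PartialOrder S]

theorem nsmul_add_le_nsmul_add [IsOrderedAddMonoid S] {u c s : S} (h : u + s ≤ c + s) (n : ℕ) :
    n • u + s ≤ n • c + s := by
  induction n with
  | zero => simp
  | succ k ih =>
    calc (k + 1) • u + s = k • u + (u + s) := by rw [succ_nsmul]; abel
      _ ≤ k • u + (c + s) := by gcongr
      _ = c + (k • u + s) := by abel
      _ ≤ c + (k • c + s) := by gcongr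
      _ = (k + 1) • c + s := by rw [succ_nsmul]; abel

theorem CC.le {s t : S} (h : CC s t) : s ≤ t := by
  obtain ⟨_, hn⟩ := h (fun _ => t) monotone_const t (by simp) le_rfl
  exact hn

theorem CC.mono {s s' t t' : S} (h : CC s' t') (hs : s ≤ s') (ht : t' ≤ t) : CC s t := by
  intro u hu x hx htx
  obtain ⟨n, hn⟩ := h u hu x hx (ht.trans htx)
  exact ⟨n, hs.trans hn⟩

namespace CuO5

theorem isOrderedAddMonoid (hS : CuO5 S) : IsOrderedAddMonoid S where
  add_le_add_left _ _ h r := hS.addRightMono h r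

theorem le_add_right (hS : CuO5 S) (s t : S) : s ≤ s + t := by
  simpa [add_comm] using hS.addRightMono (hS.zeroLe t) s

theorem le_add_left (hS : CuO5 S) (s t : S) : s ≤ t + s := by
  simpa using hS.addRightMono (hS.zeroLe t) s

theorem exists_seq_cc (hS : CuO5 S) (s : S) : ∃ u : ℕ → S, Monotone u ∧
    (∀ n, CC (u n) (u (n + 1))) ∧ (∀ n, CC (u n) s) ∧ IsLUB (Set.range u) s := by
  obtain ⟨u, hu, hs⟩ := hS.O2 s
  exact ⟨u, monotone_nat_of_le_succ fun n => (hu n).le, hu,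
    fun n => (hu n).mono le_rfl (hs.1 ⟨n + 1, rfl⟩), hs⟩

theorem exists_cc (hS : CuO5 S) (s : S) : ∃ s', CC s' s :=
  let ⟨u, _, _, hus, _⟩ := hS.exists_seq_cc s
  ⟨u 0, hus 0⟩

theorem exists_between (hS : CuO5 S) {s t : S} (h : CC s t) : ∃ r, CC s r ∧ CC r t := by
  obtain ⟨u, hu, hu', hut, hlub⟩ := hS.exists_seq_cc t
  obtain ⟨n, hn⟩ := h u hu t hlub le_rfl
  exact ⟨u (n + 1), (hu' n).mono hn le_rfl, hut _⟩

theorem exists_cc_ge_ge (hS : CuO5 S) {a b s : S} (ha : CC a s) (hb : CC b s) :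
    ∃ s', CC s' s ∧ a ≤ s' ∧ b ≤ s' := by
  obtain ⟨u, hu, -, hus, hlub⟩ := hS.exists_seq_cc s
  obtain ⟨i, hi⟩ := ha u hu s hlub le_rfl
  obtain ⟨j, hj⟩ := hb u hu s hlub le_rfl
  exact ⟨u (max i j), hus _, hi.trans (hu (le_max_left i j)), hj.trans (hu (le_max_right i j))⟩

theorem exists_le_add_of_cc_add (hS : CuO5 S) {x a b : S} (h : CC x (a + b)) :
    ∃ a' b', CC a' a ∧ CC b' b ∧ x ≤ a' + b' := by
  obtain ⟨u, hu, -, hua, hul⟩ := hS.exists_seq_cc a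
  obtain ⟨v, hv, -, hvb, hvl⟩ := hS.exists_seq_cc b
  have := hS.isOrderedAddMonoid
  obtain ⟨n, hn⟩ := h _ (hu.add hv) _ (hS.O4 u v hu hv a b hul hvl) le_rfl
  exact ⟨u n, v n, hua n, hvb n, hn⟩

theorem cc_nsmul (hS : CuO5 S) {s t : S} (h : CC s t) (n : ℕ) : CC (n • s) (n • t) := by
  induction n with
  | zero => exact fun u _ _ _ _ => ⟨0, by simpa using hS.zeroLe (u 0)⟩
  | succ k ih => simpa only [succ_nsmul] using hS.O3 ih h

end CuO5

/-- A gauge is a lower semicontinuous sublinear functional: like a functional, but only subadditive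
and superhomogeneous. It is the common generalization of functionals and of the regularized
infimal convolution `infConvReg`, for which additivity has yet to be proved. -/
structure IsGauge (p : S → ℝ≥0∞) : Prop where
  map_zero : p 0 = 0
  mono : ∀ {s t : S}, s ≤ t → p s ≤ p t
  add_le : ∀ s t : S, p (s + t) ≤ p s + p t
  nat_mul_le : ∀ (n : ℕ) (s : S), n * p s ≤ p (n • s)
  le_iSup_cc : ∀ s : S, p s ≤ ⨆ (s' : S) (_ : CC s' s), p s'

namespace IsGauge

variable {p : S → ℝ≥0∞}

theorem le_of_cc (hp : IsGauge p) {s : S} {B : ℝ≥0∞} (h : ∀ s', CC s' s → p s' ≤ B) : p s ≤ B :=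
  (hp.le_iSup_cc s).trans (iSup₂_le h)

theorem add_le_of_cc (hS : CuO5 S) (hp : IsGauge p) {s : S} {C B : ℝ≥0∞}
    (h : ∀ s', CC s' s → p s' + C ≤ B) : p s + C ≤ B :=
  calc p s + C ≤ (⨆ (s' : S) (_ : CC s' s), p s') + C := by gcongr; exact hp.le_iSup_cc s
    _ = ⨆ (s' : S) (_ : CC s' s), (p s' + C) := ENNReal.biSup_add' (hS.exists_cc s) _
    _ ≤ B := iSup₂_le h

theorem map_nsmul (hp : IsGauge p) (n : ℕ) (s : S) : p (n • s) = n * p s := by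
  refine le_antisymm ?_ (hp.nat_mul_le n s)
  induction n with
  | zero => simp [hp.map_zero]
  | succ k ih =>
    calc p ((k + 1) • s) ≤ p (k • s) + p s := by rw [succ_nsmul]; exact hp.add_le _ _
      _ ≤ k * p s + p s := by gcongr
      _ = (k + 1 : ℕ) * p s := by push_cast; ring

theorem le_of_add_le_add_right (hS : CuO5 S) (hp : IsGauge p) {u c s : S} (h : u + s ≤ c + s)
    (hs : p s ≠ ⊤) : p u ≤ p c := by
  have := hS.isOrderedAddMonoid
  refine le_of_forall_nat_mul_le_add hs fun n _ => ?_
  calc n * p u = p (n • u) := (hp.map_nsmul n u).symm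
    _ ≤ p (n • c + s) := hp.mono ((hS.le_add_right _ s).trans (nsmul_add_le_nsmul_add h n))
    _ ≤ n * p c + p s := (hp.add_le _ _).trans_eq (by rw [hp.map_nsmul])

theorem isFunctional (hp : IsGauge p) (h : ∀ s t, p s + p t ≤ p (s + t)) : IsFunctional p where
  map_zero := hp.map_zero
  map_add s t := le_antisymm (hp.add_le s t) (h s t)
  mono := hp.mono
  map_sup u hu x hx := by
    refine le_antisymm (hp.le_of_cc fun x' hx' => ?_) (iSup_le fun n => hp.mono (hx.1 ⟨n, rfl⟩))
    obtain ⟨n, hn⟩ := hx' u hu x hx le_rfl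
    exact (hp.mono hn).trans (le_iSup (fun n => p (u n)) n)

end IsGauge

namespace IsFunctional

variable {f c : S → ℝ≥0∞}

theorem map_nsmul (hf : IsFunctional f) (n : ℕ) (s : S) : f (n • s) = n * f s := by
  simpa using _root_.map_nsmul (⟨⟨f, hf.map_zero⟩, hf.map_add⟩ : S →+ ℝ≥0∞) n s

theorem isGauge (hS : CuO5 S) (hf : IsFunctional f) : IsGauge f where
  map_zero := hf.map_zero
  mono := hf.mono
  add_le s t := (hf.map_add s t).le
  nat_mul_le n s := (hf.map_nsmul n s).ge
  le_iSup_cc s := by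
    obtain ⟨u, hu, -, hus, hlub⟩ := hS.exists_seq_cc s
    rw [hf.map_sup u hu s hlub]
    exact iSup_le fun n => le_iSup₂ (f := fun s' (_ : CC s' s) => f s') (u n) (hus n)

theorem exists_cc_le_add (hS : CuO5 S) (hf : IsFunctional f) {x : S} (hx : f x ≠ ⊤)
    {η : ℝ≥0∞} (hη : η ≠ 0) : ∃ x', CC x' x ∧ f x ≤ f x' + η := by
  obtain ⟨u, hu, -, hux, hlub⟩ := hS.exists_seq_cc x
  have hsup := hf.map_sup u hu x hlub
  obtain ⟨n, hn⟩ := exists_iSup_le_add (hsup ▸ hx) hη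
  exact ⟨u n, hux n, hsup.trans_le hn⟩

theorem exists_cc_small_remainder (hS : CuO5 S) (hf : IsFunctional f) {x : S} (hx : f x ≠ ⊤)
    {η : ℝ≥0∞} (hη : η ≠ 0) : ∃ x' e, CC x' x ∧ x ≤ x' + e ∧ f e ≤ η := by
  obtain ⟨y, hy, hfy⟩ := hf.exists_cc_le_add hS hx hη
  obtain ⟨x', hyx', hx'⟩ := hS.exists_between hy
  obtain ⟨e, he, he'⟩ := hS.O5 hyx' hx'.le
  have hy_top : f y ≠ ⊤ := ne_top_of_le_ne_top hx (hf.mono hy.le)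
  refine ⟨x', e, hx', he', (ENNReal.add_le_add_iff_left hy_top).1 ?_⟩
  calc f y + f e = f (y + e) := (hf.map_add y e).symm
    _ ≤ f y + η := (hf.mono he).trans hfy

theorem le_add_of_le_of_le_add (hS : CuO5 S) (hf : IsFunctional f) (hc : IsFunctional c)
    (hcf : c ≤ f) {r y : S} (hyr : y ≤ r) (hr : f r ≠ ⊤) {δ : ℝ≥0∞} (h : f r ≤ c r + δ) :
    f y ≤ c y + δ := by
  refine (hf.isGauge hS).le_of_cc fun y' hy' => ?_
  obtain ⟨s, hs, hs'⟩ := hS.O5 hy' hyr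
  have hfs : f y' + f s ≤ f r := (hf.map_add y' s).symm.trans_le (hf.mono hs)
  have hs_top : f s ≠ ⊤ := ne_top_of_le_ne_top hr (le_add_self.trans hfs)
  refine (ENNReal.add_le_add_iff_right hs_top).1 ?_
  calc f y' + f s ≤ c r + δ := hfs.trans h
    _ ≤ c y + c s + δ := by rw [← hc.map_add]; gcongr; exact hc.mono hs'
    _ ≤ c y + f s + δ := by gcongr; exact hcf s
    _ = c y + δ + f s := by ring

end IsFunctional

namespace IsGauge

variable {p : S → ℝ≥0∞}

theorem meetValue_le_left (hp : IsGauge p) (a b : S) : meetValue p a b ≤ p a :=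
  meetValue_le fun _ ha _ => hp.mono ha

theorem meetValue_add_left_le (hS : CuO6 S) (hp : IsGauge p) (a b u : S) :
    meetValue p (a + b) u ≤ meetValue p a u + meetValue p b u := by
  refine meetValue_le fun v hab hu => hp.le_of_cc fun v' hv' => ?_
  obtain ⟨v₁, v₂, hv, h₁a, h₁v, h₂b, h₂v⟩ := hS.O6 hab hv'
  calc p v' ≤ p v₁ + p v₂ := (hp.mono hv).trans (hp.add_le _ _)
    _ ≤ meetValue p a u + meetValue p b u :=
      add_le_add (le_meetValue h₁a (h₁v.trans hu)) (le_meetValue h₂b (h₂v.trans hu))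

theorem meetValue_nsmul_left_le (hS : CuO6 S) (hp : IsGauge p) (n : ℕ) (a u : S) :
    meetValue p (n • a) u ≤ n * meetValue p a u := by
  induction n with
  | zero => simpa [hp.map_zero] using hp.meetValue_le_left 0 u
  | succ k ih =>
    calc meetValue p ((k + 1) • a) u ≤ meetValue p (k • a) u + meetValue p a u := by
          rw [succ_nsmul]; exact hp.meetValue_add_left_le hS _ _ _
      _ ≤ k * meetValue p a u + meetValue p a u := by gcongr
      _ = (k + 1 : ℕ) * meetValue p a u := by push_cast; ring

theorem nat_mul_le_of_add_le_add_right (hS : CuO6 S) (hp : IsGauge p) {u c s : S}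
    (h : u + s ≤ c + s) (n : ℕ) : n * p u ≤ n ^ 2 * meetValue p c u + p s := by
  have := hS.isOrderedAddMonoid
  have hnu : n • u ≤ n • c + s := (hS.le_add_right _ s).trans (nsmul_add_le_nsmul_add h n)
  calc n * p u ≤ p (n • u) := hp.nat_mul_le n u
    _ ≤ meetValue p (n • c + s) (n • u) := le_meetValue hnu le_rfl
    _ ≤ meetValue p (n • c) (n • u) + meetValue p s (n • u) := hp.meetValue_add_left_le hS _ _ _
    _ ≤ n * (n * meetValue p u c) + p s := by
      gcongr
      · refine (hp.meetValue_nsmul_left_le hS n c _).trans ?_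
        rw [meetValue_comm]
        gcongr
        exact hp.meetValue_nsmul_left_le hS n u c
      · exact hp.meetValue_le_left s _
    _ = n ^ 2 * meetValue p c u + p s := by rw [meetValue_comm p u c]; ring

end IsGauge

/-- The pairs that approximate a Riesz decomposition of `x` along `r + t` from below. -/
def splittings (r t x : S) : Set (S × S) :=
  {y | y.1 ≤ r ∧ y.2 ≤ t ∧ y.1 + y.2 ≤ x}

/-- The largest value of `f y + g z` over the splittings `(y, z)` of `x` along `r + t`. -/
noncomputable def splitSup (f g : S → ℝ≥0∞) (r t x : S) : ℝ≥0∞ :=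
  ⨆ y : splittings r t x, f y.1.1 + g y.1.2

section Splittings

variable {p f g : S → ℝ≥0∞} {r t x : S}

theorem nonempty_splittings (hS : CuO5 S) (r t x : S) : Nonempty (splittings r t x) :=
  ⟨(0, 0), hS.zeroLe r, hS.zeroLe t, by simpa using hS.zeroLe x⟩

theorem le_splitSup {y z : S} (hy : y ≤ r) (hz : z ≤ t) (hyz : y + z ≤ x) :
    f y + g z ≤ splitSup f g r t x :=
  le_iSup (fun y : splittings r t x => f y.1.1 + g y.1.2) ⟨(y, z), hy, hz, hyz⟩

theorem splitSup_le {B : ℝ≥0∞} (h : ∀ y z, y ≤ r → z ≤ t → y + z ≤ x → f y + g z ≤ B) :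
    splitSup f g r t x ≤ B :=
  iSup_le fun y => h _ _ y.2.1 y.2.2.1 y.2.2.2

theorem splitSup_add_le (hS : CuO5 S) {B C : ℝ≥0∞}
    (h : ∀ y z, y ≤ r → z ≤ t → y + z ≤ x → f y + g z + C ≤ B) : splitSup f g r t x + C ≤ B := by
  have := nonempty_splittings hS r t x
  rw [splitSup, ENNReal.iSup_add]
  exact iSup_le fun y => h _ _ y.2.1 y.2.2.1 y.2.2.2

theorem splitSup_comm (f g : S → ℝ≥0∞) (r t x : S) : splitSup f g r t x = splitSup g f t r x := by
  have h (f g : S → ℝ≥0∞) (r t : S) : splitSup f g r t x ≤ splitSup g f t r x :=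
    splitSup_le fun y z hy hz hyz =>
      (add_comm _ _).trans_le (le_splitSup hz hy ((add_comm z y).trans_le hyz))
  exact le_antisymm (h f g r t) (h g f t r)

theorem exists_cc_splitSup_le_add (hS : CuO5 S) (hf : IsFunctional f) (hg : IsFunctional g)
    (hM : splitSup f g r t x ≠ ⊤) {η : ℝ≥0∞} (hη : η ≠ 0) :
    ∃ x₁ x₂ y₁ y₂ e₁ e₂, x₁ ≤ r ∧ x₂ ≤ t ∧ x₁ + x₂ ≤ x ∧ CC y₁ x₁ ∧ CC y₂ x₂ ∧
      x₁ ≤ y₁ + e₁ ∧ x₂ ≤ y₂ + e₂ ∧ f e₁ ≤ η ∧ g e₂ ≤ η ∧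
      splitSup f g r t x ≤ f y₁ + g y₂ + 3 * η := by
  have := nonempty_splittings hS r t x
  obtain ⟨⟨⟨x₁, x₂⟩, hx₁r, hx₂t, hx₁₂⟩, hmax⟩ := exists_iSup_le_add hM hη
  obtain ⟨hfx₁, hgx₂⟩ := ENNReal.add_ne_top.1 <|
    ne_top_of_le_ne_top hM (le_splitSup (f := f) (g := g) hx₁r hx₂t hx₁₂)
  obtain ⟨y₁, e₁, hy₁, hxe₁, hfe₁⟩ := hf.exists_cc_small_remainder hS hfx₁ hη
  obtain ⟨y₂, e₂, hy₂, hxe₂, hge₂⟩ := hg.exists_cc_small_remainder hS hgx₂ hη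
  refine ⟨x₁, x₂, y₁, y₂, e₁, e₂, hx₁r, hx₂t, hx₁₂, hy₁, hy₂, hxe₁, hxe₂, hfe₁, hge₂, ?_⟩
  calc splitSup f g r t x ≤ f (y₁ + e₁) + g (y₂ + e₂) + η :=
        hmax.trans (by gcongr; exacts [hf.mono hxe₁, hg.mono hxe₂])
    _ ≤ (f y₁ + η) + (g y₂ + η) + η := by rw [hf.map_add, hg.map_add]; gcongr
    _ = f y₁ + g y₂ + 3 * η := by ring

theorem meetValue_le_of_splitSup_le [IsOrderedAddMonoid S] (hf : IsFunctional f) (hpf : p ≤ f)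
    {y z r' u : S} (hyr : y + r' ≤ r) (hz : z ≤ t) (hyzu : y + z + u ≤ x) {ε : ℝ≥0∞}
    (hmax : splitSup f g r t x ≤ f y + g z + ε) (hyz : f y + g z ≠ ⊤) :
    meetValue p r' u ≤ ε := by
  refine meetValue_le fun v hvr hvu => (hpf v).trans ((ENNReal.add_le_add_iff_left hyz).1 ?_)
  calc f y + g z + f v = f (y + v) + g z := by rw [hf.map_add]; ring
    _ ≤ splitSup f g r t x := by
      refine le_splitSup ?_ hz ?_
      · exact hyr.trans' (by gcongr)
      · exact hyzu.trans' (by rw [add_right_comm]; gcongr)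
    _ ≤ f y + g z + ε := hmax

namespace IsGauge

theorem map_add_le_of_le (hp : IsGauge p) (hpf : p ≤ f) (hpg : p ≤ g) (a b : S) :
    p (a + b) ≤ f a + g b :=
  (hp.add_le a b).trans (add_le_add (hpf a) (hpg b))

theorem exists_small_remainder (hS : CuO6 S) (hp : IsGauge p) (hf : IsFunctional f)
    (hg : IsFunctional g) (hpf : p ≤ f) (hpg : p ≤ g) (hx : x ≤ r + t)
    (hM : splitSup f g r t x ≠ ⊤) {η : ℝ≥0∞} (hη : η ≠ 0) :
    ∃ u c s, p x ≤ splitSup f g r t x + p u ∧ p s ≤ splitSup f g r t x ∧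
      u + s ≤ c + s ∧ meetValue p c u ≤ 8 * η := by
  have := hS.isOrderedAddMonoid
  obtain ⟨x₁, x₂, y₁, y₂, e₁, e₂, hx₁r, hx₂t, hx₁₂, hy₁, hy₂, hxe₁, hxe₂, hfe₁, hge₂, hmax⟩ :=
    exists_cc_splitSup_le_add hS.toCuO5 hf hg hM hη
  have hy₁r : y₁ ≤ r := hy₁.le.trans hx₁r
  have hy₂t : y₂ ≤ t := hy₂.le.trans hx₂t
  obtain ⟨r', hr, hr'⟩ := hS.O5 hy₁ hx₁r
  obtain ⟨t', ht, ht'⟩ := hS.O5 hy₂ hx₂t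
  obtain ⟨u, hu, hu'⟩ := hS.O5 (hS.O3 hy₁ hy₂) hx₁₂
  have hy₁₂ : y₁ + y₂ ≤ x := (hS.le_add_right _ u).trans hu
  have hy_fin : f y₁ + g y₂ ≠ ⊤ := ne_top_of_le_ne_top hM (le_splitSup hy₁r hy₂t hy₁₂)
  have hr'_small : meetValue p r' u ≤ 3 * η :=
    meetValue_le_of_splitSup_le hf hpf hr hy₂t hu hmax hy_fin
  have ht'_small : meetValue p t' u ≤ 3 * η := by
    rw [splitSup_comm, add_comm (f y₁)] at hmax
    rw [add_comm] at hy_fin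
    rw [add_comm y₁] at hu
    exact meetValue_le_of_splitSup_le hg hpg ht hy₁r hu hmax hy_fin
  refine ⟨u, r' + t' + (e₁ + e₂), y₁ + y₂, ?_, ?_, ?_, ?_⟩
  · calc p x ≤ p (x₁ + x₂) + p u := (hp.mono hu').trans (hp.add_le _ _)
      _ ≤ splitSup f g r t x + p u := by
        gcongr; exact (hp.map_add_le_of_le hpf hpg x₁ x₂).trans (le_splitSup hx₁r hx₂t hx₁₂)
  · exact (hp.map_add_le_of_le hpf hpg y₁ y₂).trans (le_splitSup hy₁r hy₂t hy₁₂)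
  · calc u + (y₁ + y₂) = y₁ + y₂ + u := add_comm _ _
      _ ≤ r + t := hu.trans hx
      _ ≤ (x₁ + r') + (x₂ + t') := by gcongr
      _ ≤ (y₁ + e₁ + r') + (y₂ + e₂ + t') := by gcongr
      _ = r' + t' + (e₁ + e₂) + (y₁ + y₂) := by abel
  · have hadd := hp.meetValue_add_left_le hS
    calc meetValue p (r' + t' + (e₁ + e₂)) u
        ≤ (meetValue p r' u + meetValue p t' u) + (meetValue p e₁ u + meetValue p e₂ u) :=
          (hadd _ _ u).trans (add_le_add (hadd _ _ u) (hadd _ _ u))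
      _ ≤ (3 * η + 3 * η) + (η + η) := by
        gcongr
        · exact (hp.meetValue_le_left e₁ u).trans ((hpf e₁).trans hfe₁)
        · exact (hp.meetValue_le_left e₂ u).trans ((hpg e₂).trans hge₂)
      _ = 8 * η := by ring

theorem le_splitSup (hS : CuO6 S) (hp : IsGauge p) (hf : IsFunctional f) (hg : IsFunctional g)
    (hpf : p ≤ f) (hpg : p ≤ g) (hx : x ≤ r + t) : p x ≤ splitSup f g r t x := by
  rcases eq_or_ne (splitSup f g r t x) ⊤ with hM | hM
  · exact hM ▸ le_top
  refine le_of_forall_nat_mul_le_add (C := 8 + splitSup f g r t x) (by finiteness) fun n hn => ?_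
  have hn_sq : (n : ℝ≥0∞) ^ 2 ≠ 0 := by positivity
  have hn_sq_top : (n : ℝ≥0∞) ^ 2 ≠ ⊤ := by finiteness
  obtain ⟨u, c, s, hpx, hps, hcancel, hsmall⟩ :=
    hp.exists_small_remainder hS hf hg hpf hpg hx hM (ENNReal.inv_ne_zero.2 hn_sq_top)
  calc n * p x ≤ n * splitSup f g r t x + n * p u := by rw [← mul_add]; gcongr
    _ ≤ n * splitSup f g r t x + (n ^ 2 * meetValue p c u + p s) := by
      gcongr; exact hp.nat_mul_le_of_add_le_add_right hS hcancel n
    _ ≤ n * splitSup f g r t x + (n ^ 2 * (8 * ((n : ℝ≥0∞) ^ 2)⁻¹) + splitSup f g r t x) := by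
      gcongr
    _ = n * splitSup f g r t x + (8 + splitSup f g r t x) := by
      rw [mul_left_comm, ENNReal.mul_inv_cancel hn_sq hn_sq_top, mul_one]

theorem splitSup_add_le_of_add_le (hS : CuO5 S) (hp : IsGauge p) (hf : IsFunctional f)
    (hg : IsFunctional g) (hpf : p ≤ f) (hpg : p ≤ g) {y : S} (h : x + y ≤ r + t) :
    splitSup f g r t x + p y ≤ f r + g t := by
  have := hS.isOrderedAddMonoid
  rcases eq_or_ne (f r + g t) ⊤ with htop | htop
  · exact htop ▸ le_top
  refine splitSup_add_le hS fun x₁ x₂ hx₁r hx₂t hx₁₂ => ?_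
  rw [add_assoc]
  refine (hf.isGauge hS).add_le_of_cc hS fun y₁ hy₁ => ?_
  rw [add_left_comm]
  refine (hg.isGauge hS).add_le_of_cc hS fun y₂ hy₂ => ?_
  obtain ⟨r', hr, hr'⟩ := hS.O5 hy₁ hx₁r
  obtain ⟨t', ht, ht'⟩ := hS.O5 hy₂ hx₂t
  have hfin : p (x₁ + x₂) ≠ ⊤ :=
    ne_top_of_le_ne_top htop <|
      (hp.map_add_le_of_le hpf hpg x₁ x₂).trans (add_le_add (hf.mono hx₁r) (hg.mono hx₂t))
  have hcancel : y + (x₁ + x₂) ≤ (r' + t') + (x₁ + x₂) :=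
    calc y + (x₁ + x₂) ≤ x + y := by rw [add_comm]; gcongr
      _ ≤ (x₁ + r') + (x₂ + t') := h.trans (by gcongr)
      _ = (r' + t') + (x₁ + x₂) := by abel
  calc g y₂ + (f y₁ + p y) ≤ g y₂ + (f y₁ + (f r' + g t')) := by
        gcongr
        exact (hp.le_of_add_le_add_right hS hcancel hfin).trans (hp.map_add_le_of_le hpf hpg r' t')
    _ = f (y₁ + r') + g (y₂ + t') := by rw [hf.map_add, hg.map_add]; ring
    _ ≤ f r + g t := add_le_add (hf.mono hr) (hg.mono ht)

end IsGauge

end Splittings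

section InfConv

variable {f g : S → ℝ≥0∞}

/-- The homogenized infimal convolution of `f` and `g`, that is, the infimum of `(f r + g t) / n`
over all `n • x ≤ r + t`. -/
noncomputable def infConv (f g : S → ℝ≥0∞) (x : S) : ℝ≥0∞ :=
  sInf {B | ∃ (n : ℕ) (r t : S), n ≠ 0 ∧ n • x ≤ r + t ∧ f r + g t ≤ n * B}

theorem nat_mul_infConv_le {n : ℕ} {x r t : S} (h : n • x ≤ r + t) :
    n * infConv f g x ≤ f r + g t := by
  rcases eq_or_ne n 0 with rfl | hn
  · simp
  · refine ENNReal.mul_le_of_le_div' (sInf_le ⟨n, r, t, hn, h, ?_⟩)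
    exact (ENNReal.mul_div_cancel (by exact_mod_cast hn) (ENNReal.natCast_ne_top n)).ge

theorem le_infConv {x : S} {B : ℝ≥0∞}
    (h : ∀ (n : ℕ) (r t : S), n • x ≤ r + t → n * B ≤ f r + g t) : B ≤ infConv f g x := by
  refine le_sInf ?_
  rintro B' ⟨n, r, t, hn, hx, hB'⟩
  exact (ENNReal.mul_le_mul_iff_right (by exact_mod_cast hn) (ENNReal.natCast_ne_top n)).1
    ((h n r t hx).trans hB')

theorem infConv_le_left (hg : IsFunctional g) (x : S) : infConv f g x ≤ f x := by
  simpa [hg.map_zero] using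
    nat_mul_infConv_le (f := f) (g := g) (n := 1) (x := x) (r := x) (t := 0) (by simp)

theorem infConv_le_right (hf : IsFunctional f) (x : S) : infConv f g x ≤ g x := by
  simpa [hf.map_zero] using
    nat_mul_infConv_le (f := f) (g := g) (n := 1) (x := x) (r := 0) (t := x) (by simp)

theorem infConv_mono [IsOrderedAddMonoid S] {x y : S} (h : x ≤ y) :
    infConv f g x ≤ infConv f g y :=
  le_infConv fun n _ _ hy => nat_mul_infConv_le ((nsmul_le_nsmul_right h n).trans hy)

theorem nat_mul_infConv_le_infConv_nsmul (k : ℕ) (x : S) :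
    k * infConv f g x ≤ infConv f g (k • x) := by
  refine le_infConv fun n r t h => ?_
  rw [← mul_assoc, ← Nat.cast_mul]
  exact nat_mul_infConv_le (by rwa [mul_nsmul'])

theorem infConv_add_le [IsOrderedAddMonoid S] (hf : IsFunctional f) (hg : IsFunctional g)
    (x y : S) : infConv f g (x + y) ≤ infConv f g x + infConv f g y := by
  rw [infConv.eq_1 f g x, infConv.eq_1 f g y, sInf_eq_iInf, sInf_eq_iInf]
  refine ENNReal.le_iInf₂_add_iInf₂ ?_
  rintro B ⟨n, r, t, hn, hx, hB⟩ B' ⟨k, r', t', hk, hy, hB'⟩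
  refine sInf_le ⟨n * k, k • r + n • r', k • t + n • t', mul_ne_zero hn hk, ?_, ?_⟩
  · calc (n * k) • (x + y) = k • (n • x) + n • (k • y) := by
          rw [nsmul_add, mul_nsmul, mul_nsmul']
      _ ≤ k • (r + t) + n • (r' + t') := by gcongr
      _ = (k • r + n • r') + (k • t + n • t') := by simp only [nsmul_add]; abel
  · calc f (k • r + n • r') + g (k • t + n • t') = k * (f r + g t) + n * (f r' + g t') := by
          simp only [hf.map_add, hg.map_add, hf.map_nsmul, hg.map_nsmul]; ring
      _ ≤ k * (n * B) + n * (k * B') := by gcongr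
      _ = (n * k : ℕ) * (B + B') := by push_cast; ring

/-- The lower semicontinuous regularization of `infConv f g`; it is the infimum of the functionals
`f` and `g`. -/
noncomputable def infConvReg (f g : S → ℝ≥0∞) (x : S) : ℝ≥0∞ :=
  ⨆ (x' : S) (_ : CC x' x), infConv f g x'

theorem infConv_le_infConvReg {x' x : S} (h : CC x' x) : infConv f g x' ≤ infConvReg f g x :=
  le_iSup₂ (f := fun x' (_ : CC x' x) => infConv f g x') x' h

theorem infConvReg_le_infConv [IsOrderedAddMonoid S] : infConvReg f g ≤ infConv f g :=
  fun _ => iSup₂_le fun _ hx' => infConv_mono hx'.le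

theorem infConvReg_le_left [IsOrderedAddMonoid S] (hg : IsFunctional g) : infConvReg f g ≤ f :=
  fun x => (infConvReg_le_infConv x).trans (infConv_le_left hg x)

theorem infConvReg_le_right [IsOrderedAddMonoid S] (hf : IsFunctional f) : infConvReg f g ≤ g :=
  fun x => (infConvReg_le_infConv x).trans (infConv_le_right hf x)

theorem isGauge_infConvReg (hS : CuO5 S) (hf : IsFunctional f) (hg : IsFunctional g) :
    IsGauge (infConvReg f g) := by
  have := hS.isOrderedAddMonoid
  exact {
    map_zero := le_antisymm ((infConvReg_le_left hg 0).trans hf.map_zero.le) zero_le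
    mono h := iSup₂_le fun _ hx' => infConv_le_infConvReg (hx'.mono le_rfl h)
    add_le s t := iSup₂_le fun x' hx' => by
      obtain ⟨a, b, ha, hb, hab⟩ := hS.exists_le_add_of_cc_add hx'
      calc infConv f g x' ≤ infConv f g a + infConv f g b :=
            (infConv_mono hab).trans (infConv_add_le hf hg a b)
        _ ≤ infConvReg f g s + infConvReg f g t :=
            add_le_add (infConv_le_infConvReg ha) (infConv_le_infConvReg hb)
    nat_mul_le n s := by
      simp only [infConvReg.eq_1 f g s, ENNReal.mul_iSup]
      exact iSup₂_le fun x' hx' =>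
        (nat_mul_infConv_le_infConv_nsmul n x').trans (infConv_le_infConvReg (hS.cc_nsmul hx' n))
    le_iSup_cc s := iSup₂_le fun x' hx' => by
      obtain ⟨y, hx'y, hys⟩ := hS.exists_between hx'
      exact le_iSup₂_of_le y hys (infConv_le_infConvReg hx'y) }

theorem isFunctional_infConvReg (hS : CuO6 S) (hf : IsFunctional f) (hg : IsFunctional g) :
    IsFunctional (infConvReg f g) := by
  have := hS.isOrderedAddMonoid
  have hS5 := hS.toCuO5
  have hp := isGauge_infConvReg hS5 hf hg
  have hpf : infConvReg f g ≤ f := infConvReg_le_left hg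
  have hpg : infConvReg f g ≤ g := infConvReg_le_right hf
  have add_le_of_add_le {x y r t : S} (h : x + y ≤ r + t) :
      infConvReg f g x + infConvReg f g y ≤ f r + g t :=
    calc infConvReg f g x + infConvReg f g y ≤ splitSup f g r t x + infConvReg f g y := by
          gcongr; exact hp.le_splitSup hS hf hg hpf hpg ((hS.le_add_right x y).trans h)
      _ ≤ f r + g t := hp.splitSup_add_le_of_add_le hS5 hf hg hpf hpg h
  have add_le_infConv (x y : S) :
      infConvReg f g x + infConvReg f g y ≤ infConv f g (x + y) := by
    refine le_infConv fun n r t h => ?_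
    rw [mul_add, ← hp.map_nsmul, ← hp.map_nsmul]
    exact add_le_of_add_le (by rwa [← nsmul_add])
  refine hp.isFunctional fun x y => hp.add_le_of_cc hS5 fun x' hx' => ?_
  rw [add_comm]
  refine hp.add_le_of_cc hS5 fun y' hy' => ?_
  rw [add_comm]
  exact (add_le_infConv x' y').trans (infConv_le_infConvReg (hS.O3 hx' hy'))

end InfConv

section SupConv

variable {f g : S → ℝ≥0∞}

/-- The supremal convolution of `f` and `g`; it is the supremum of the functionals `f` and `g`. -/
noncomputable def supConv (f g : S → ℝ≥0∞) (x : S) : ℝ≥0∞ :=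
  ⨆ (y : S × S) (_ : y.1 + y.2 ≤ x), f y.1 + g y.2

theorem le_supConv {x y z : S} (h : y + z ≤ x) : f y + g z ≤ supConv f g x :=
  le_iSup₂ (f := fun (y : S × S) (_ : y.1 + y.2 ≤ x) => f y.1 + g y.2) (y, z) h

theorem supConv_le {x : S} {B : ℝ≥0∞} (h : ∀ y z, y + z ≤ x → f y + g z ≤ B) :
    supConv f g x ≤ B :=
  iSup₂_le fun y hy => h y.1 y.2 hy

theorem supConv_mono {x x' : S} (h : x ≤ x') : supConv f g x ≤ supConv f g x' :=
  supConv_le fun _ _ hyz => le_supConv (hyz.trans h)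

theorem left_le_supConv (hg : IsFunctional g) : f ≤ supConv f g := fun x => by
  simpa [hg.map_zero] using le_supConv (f := f) (g := g) (x := x) (y := x) (z := 0) (by simp)

theorem right_le_supConv (hf : IsFunctional f) : g ≤ supConv f g := fun x => by
  simpa [hf.map_zero] using le_supConv (f := f) (g := g) (x := x) (y := 0) (z := x) (by simp)

theorem supConv_zero (hS : CuO5 S) (hf : IsFunctional f) (hg : IsFunctional g) :
    supConv f g 0 = 0 := by
  refine le_antisymm (supConv_le fun y z h => ?_) zero_le
  calc f y + g z ≤ f 0 + g 0 :=
        add_le_add (hf.mono ((hS.le_add_right y z).trans h))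
          (hg.mono ((hS.le_add_left z y).trans h))
    _ = 0 := by rw [hf.map_zero, hg.map_zero, add_zero]

theorem add_le_supConv_add (hS : CuO5 S) (hf : IsFunctional f) (hg : IsFunctional g) {x z : S}
    (h : z ≤ x) : f x + g z ≤ supConv f g x + f z := by
  rw [add_comm]
  refine (hg.isGauge hS).add_le_of_cc hS fun z' hz' => ?_
  obtain ⟨r, hr, hr'⟩ := hS.O5 hz' h
  calc g z' + f x ≤ g z' + (f z + f r) := by rw [← hf.map_add]; gcongr; exact hf.mono hr'
    _ = (f r + g z') + f z := by ring
    _ ≤ supConv f g x + f z := by gcongr; exact le_supConv (by rwa [add_comm])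

theorem supConv_add_le (hS : CuO6 S) (hf : IsFunctional f) (hg : IsFunctional g) (x₁ x₂ : S) :
    supConv f g (x₁ + x₂) ≤ supConv f g x₁ + supConv f g x₂ := by
  have hS5 := hS.toCuO5
  rcases eq_or_ne (f x₁ + f x₂) ⊤ with htop | htop
  · exact le_top.trans <| htop.symm.trans_le <|
      add_le_add (left_le_supConv hg x₁) (left_le_supConv hg x₂)
  refine supConv_le fun y z h => ?_
  have hsplit : g z ≤ splitSup g g x₁ x₂ z :=
    (hg.isGauge hS5).le_splitSup hS hg hg le_rfl le_rfl ((hS.le_add_left z y).trans h)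
  rw [add_comm]
  refine (add_le_add_left hsplit _).trans (splitSup_add_le hS5 fun z₁ z₂ hz₁ hz₂ hz => ?_)
  have hfz : f z₁ + f z₂ ≠ ⊤ := ne_top_of_le_ne_top htop (add_le_add (hf.mono hz₁) (hf.mono hz₂))
  refine (ENNReal.add_le_add_iff_right hfz).1 ?_
  calc g z₁ + g z₂ + f y + (f z₁ + f z₂) = f (y + (z₁ + z₂)) + (g z₁ + g z₂) := by
        rw [hf.map_add, hf.map_add]; ring
    _ ≤ f (x₁ + x₂) + (g z₁ + g z₂) := by
        have := hS.isOrderedAddMonoid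
        gcongr
        exact hf.mono (h.trans' (by gcongr))
    _ = (f x₁ + g z₁) + (f x₂ + g z₂) := by rw [hf.map_add]; ring
    _ ≤ (supConv f g x₁ + f z₁) + (supConv f g x₂ + f z₂) :=
        add_le_add (add_le_supConv_add hS5 hf hg hz₁) (add_le_supConv_add hS5 hf hg hz₂)
    _ = supConv f g x₁ + supConv f g x₂ + (f z₁ + f z₂) := by ring

theorem supConv_add_supConv_le (hS : CuO5 S) (hf : IsFunctional f) (hg : IsFunctional g)
    (x₁ x₂ : S) : supConv f g x₁ + supConv f g x₂ ≤ supConv f g (x₁ + x₂) := by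
  have := hS.isOrderedAddMonoid
  have hne (x : S) : ∃ y : S × S, y.1 + y.2 ≤ x := ⟨0, by simpa using hS.zeroLe x⟩
  refine ENNReal.biSup_add_biSup_le' (hne x₁) (hne x₂) fun y hy z hz => ?_
  calc f y.1 + g y.2 + (f z.1 + g z.2) = f (y.1 + z.1) + g (y.2 + z.2) := by
        rw [hf.map_add, hg.map_add]; ring
    _ ≤ supConv f g (x₁ + x₂) := le_supConv (by rw [add_add_add_comm]; gcongr)

theorem isFunctional_supConv (hS : CuO6 S) (hf : IsFunctional f) (hg : IsFunctional g) :
    IsFunctional (supConv f g) where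
  map_zero := supConv_zero hS.toCuO5 hf hg
  map_add x₁ x₂ :=
    le_antisymm (supConv_add_le hS hf hg x₁ x₂) (supConv_add_supConv_le hS.toCuO5 hf hg x₁ x₂)
  mono := supConv_mono
  map_sup u hu x hx := by
    have hS5 := hS.toCuO5
    refine le_antisymm (supConv_le fun y z h => ?_) (iSup_le fun n => supConv_mono (hx.1 ⟨n, rfl⟩))
    refine (hf.isGauge hS5).add_le_of_cc hS5 fun y' hy' => ?_
    rw [add_comm]
    refine (hg.isGauge hS5).add_le_of_cc hS5 fun z' hz' => ?_
    obtain ⟨n, hn⟩ := hS.O3 hy' hz' u hu x hx h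
    calc g z' + f y' ≤ supConv f g (u n) := (add_comm _ _).trans_le (le_supConv hn)
      _ ≤ ⨆ n, supConv f g (u n) := le_iSup (fun n => supConv f g (u n)) n

theorem IsFSup.le_supConv (hS : CuO6 S) (hf : IsFunctional f) (hg : IsFunctional g)
    {m : S → ℝ≥0∞} (hm : IsFSup f g m) : m ≤ supConv f g :=
  hm.2.2.2 _ (isFunctional_supConv hS hf hg) (left_le_supConv hg) (right_le_supConv hf)

end SupConv

section Distrib

variable {f g c : S → ℝ≥0∞}

theorem IsFInf.infConvReg_le (hS : CuO6 S) (hf : IsFunctional f) (hg : IsFunctional g)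
    (hc : IsFInf f g c) : infConvReg f g ≤ c :=
  have := hS.isOrderedAddMonoid
  hc.2.2.2 _ (isFunctional_infConvReg hS hf hg) (infConvReg_le_left hg) (infConvReg_le_right hf)

theorem IsFInf.exists_nsmul_le_add (hS : CuO6 S) (hf : IsFunctional f) (hg : IsFunctional g)
    (hc : IsFInf f g c) {x x₁ : S} (hx : c x ≠ ⊤) (hx₁ : CC x₁ x) {ε : ℝ≥0∞} (hε : ε ≠ 0) :
    ∃ (n : ℕ) (r t : S), n ≠ 0 ∧ n • x₁ ≤ r + t ∧ f r ≠ ⊤ ∧ g t ≠ ⊤ ∧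
      f r ≤ c r + n * ε ∧ g t ≤ c t + n * ε := by
  have := hS.isOrderedAddMonoid
  obtain ⟨hcF, hcf, hcg, -⟩ := id hc
  have hε2 : ε / 2 ≠ 0 := (ENNReal.half_pos hε).ne'
  obtain ⟨x₀, hx₀, hcx₀⟩ := hcF.exists_cc_le_add hS.toCuO5 hx hε2
  obtain ⟨x', hx', h₀, h₁⟩ := hS.exists_cc_ge_ge hx₀ hx₁
  have hlt : infConv f g x' < c x + ε / 2 :=
    ((infConv_le_infConvReg hx').trans (hc.infConvReg_le hS hf hg x)).trans_lt
      (ENNReal.lt_add_right hx hε2)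
  obtain ⟨B, ⟨n, r, t, hn, hrt, hB⟩, hBlt⟩ := sInf_lt_iff.1 hlt
  obtain ⟨hr, ht⟩ : f r ≠ ⊤ ∧ g t ≠ ⊤ :=
    ENNReal.add_ne_top.1 (ne_top_of_le_ne_top (ENNReal.mul_ne_top (by finiteness) hBlt.ne_top) hB)
  have hsum : f r + g t ≤ c r + c t + n * ε :=
    calc f r + g t ≤ n * (c x + ε / 2) := hB.trans (by gcongr)
      _ ≤ n * (c x' + ε / 2 + ε / 2) := by gcongr; exact hcx₀.trans (by gcongr; exact hcF.mono h₀)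
      _ = c (n • x') + n * ε := by rw [hcF.map_nsmul, add_assoc, ENNReal.add_halves, mul_add]
      _ ≤ c r + c t + n * ε := by rw [← hcF.map_add]; gcongr; exact hcF.mono hrt
  refine ⟨n, r, t, hn, (nsmul_le_nsmul_right h₁ n).trans hrt, hr, ht, ?_, ?_⟩
  · refine (ENNReal.add_le_add_iff_right ht).1 (hsum.trans ?_)
    calc c r + c t + n * ε ≤ c r + g t + n * ε := by gcongr; exact hcg t
      _ = c r + n * ε + g t := by ring
  · refine (ENNReal.add_le_add_iff_left hr).1 (hsum.trans ?_)
    calc c r + c t + n * ε ≤ f r + c t + n * ε := by gcongr; exact hcf r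
      _ = f r + (c t + n * ε) := by ring

/-- A functional below `f` can be compared with one above `f ∧ g` by looking only at elements on
which `g` is close to `f ∧ g`, since on the others `f` is. -/
theorem IsFInf.le_add_of_forall_le_add (hS : CuO6 S) (hf : IsFunctional f) (hg : IsFunctional g)
    (hc : IsFInf f g c) {μ w : S → ℝ≥0∞} (hμ : IsFunctional μ) (hw : IsFunctional w)
    (hμf : μ ≤ f) (hcw : c ≤ w) {x : S} (hx : c x ≠ ⊤) {K : ℝ≥0∞}
    (h : ∀ (n : ℕ) (δ : ℝ≥0∞) (z : S), z ≤ n • x → g z ≠ ⊤ → g z ≤ c z + δ →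
      μ z ≤ w z + δ + n * K) : μ x ≤ w x + K := by
  have := hS.isOrderedAddMonoid
  have hS5 := hS.toCuO5
  refine ENNReal.le_of_forall_pos_le_add fun ε hε _ => (hμ.isGauge hS5).le_of_cc fun x₁ hx₁ => ?_
  have hε2 : (ε : ℝ≥0∞) / 2 ≠ 0 := (ENNReal.half_pos (by exact_mod_cast hε.ne')).ne'
  obtain ⟨n, r, t, hn, hrt, hr, ht, hfr, hgt⟩ := hc.exists_nsmul_le_add hS hf hg hx hx₁ hε2
  obtain ⟨hcF, hcf, hcg, -⟩ := hc
  refine (ENNReal.mul_le_mul_iff_right (by exact_mod_cast hn) (ENNReal.natCast_ne_top n)).1 ?_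
  rw [← hμ.map_nsmul]
  refine ((hμ.isGauge hS5).le_splitSup hS hμ hμ le_rfl le_rfl hrt).trans
    (splitSup_le fun y z hy hz hyz => ?_)
  have hyz' : y + z ≤ n • x := hyz.trans (nsmul_le_nsmul_right hx₁.le n)
  have hμy : μ y ≤ w y + n * (ε / 2) :=
    calc μ y ≤ c y + n * (ε / 2) :=
          (hμf y).trans (hf.le_add_of_le_of_le_add hS5 hcF hcf hy hr hfr)
      _ ≤ w y + n * (ε / 2) := by gcongr; exact hcw y
  have hμz : μ z ≤ w z + n * (ε / 2) + n * K :=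
    h n _ z ((hS.le_add_left z y).trans hyz') (ne_top_of_le_ne_top ht (hg.mono hz))
      (hg.le_add_of_le_of_le_add hS5 hcF hcg hz ht hgt)
  calc μ y + μ z ≤ (w y + n * (ε / 2)) + (w z + n * (ε / 2) + n * K) := add_le_add hμy hμz
    _ = w (y + z) + n * (ε / 2 + ε / 2) + n * K := by rw [hw.map_add]; ring
    _ ≤ n * w x + n * ε + n * K := by
        rw [ENNReal.add_halves, ← hw.map_nsmul]; gcongr; exact hw.mono hyz'
    _ = n * (w x + K + ε) := by ring

theorem le_of_le_of_le_supConv (hS : CuO6 S) {g₁ g₂ c₁ c₂ μ w : S → ℝ≥0∞} (hf : IsFunctional f)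
    (hg₁ : IsFunctional g₁) (hg₂ : IsFunctional g₂) (hc₁ : IsFInf f g₁ c₁) (hc₂ : IsFInf f g₂ c₂)
    (hμ : IsFunctional μ) (hw : IsFunctional w) (hμf : μ ≤ f) (hμg : μ ≤ supConv g₁ g₂)
    (hcw₁ : c₁ ≤ w) (hcw₂ : c₂ ≤ w) : μ ≤ w := by
  intro x
  rcases eq_or_ne (w x) ⊤ with hx | hx
  · exact hx ▸ le_top
  have hS5 := hS.toCuO5
  suffices μ x ≤ w x + 0 by simpa using this
  refine hc₁.le_add_of_forall_le_add hS hf hg₁ hμ hw hμf hcw₁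
    (ne_top_of_le_ne_top hx (hcw₁ x)) fun n δ y hy hy_fin hyδ => ?_
  have hwy : w y ≠ ⊤ := by
    refine ne_top_of_le_ne_top ?_ (hw.mono hy)
    rw [hw.map_nsmul]
    finiteness
  rw [mul_zero, add_zero]
  refine hc₂.le_add_of_forall_le_add hS hf hg₂ hμ hw hμf hcw₂
    (ne_top_of_le_ne_top hwy (hcw₂ y)) fun k δ' z hz hz_fin hzδ' => ?_
  have hkyδ : g₁ (k • y) ≤ c₁ (k • y) + k * δ := by
    rw [hg₁.map_nsmul, hc₁.1.map_nsmul, ← mul_add]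
    gcongr
  have hky_fin : g₁ (k • y) ≠ ⊤ := by rw [hg₁.map_nsmul]; finiteness
  refine (hμg z).trans (supConv_le fun u v huv => ?_)
  have hu : g₁ u ≤ w u + k * δ :=
    (hg₁.le_add_of_le_of_le_add hS5 hc₁.1 hc₁.2.2.1
      (((hS.le_add_right u v).trans huv).trans hz) hky_fin hkyδ).trans (by gcongr; exact hcw₁ u)
  have hv : g₂ v ≤ w v + δ' :=
    (hg₂.le_add_of_le_of_le_add hS5 hc₂.1 hc₂.2.2.1
      ((hS.le_add_left v u).trans huv) hz_fin hzδ').trans (by gcongr; exact hcw₂ v)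
  calc g₁ u + g₂ v ≤ (w u + k * δ) + (w v + δ') := add_le_add hu hv
    _ = w (u + v) + δ' + k * δ := by rw [hw.map_add]; ring
    _ ≤ w z + δ' + k * δ := by gcongr; exact hw.mono huv

end Distrib

end

/-- the lattice F(S) is distributive:
`λ₁ ∧ (λ₂ ∨ λ₃) = (λ₁ ∧ λ₂) ∨ (λ₁ ∧ λ₃)`. -/
theorem functionals_distrib {S : Type*} [AddCommMonoid S] [PartialOrder S]
    (hS : CuO6 S) (l₁ l₂ l₃ : S → ℝ≥0∞)
    (h₁ : IsFunctional l₁) (h₂ : IsFunctional l₂) (h₃ : IsFunctional l₃)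
    (a b c d e : S → ℝ≥0∞)
    (ha : IsFSup l₂ l₃ a) (hb : IsFInf l₁ a b)
    (hc : IsFInf l₁ l₂ c) (hd : IsFInf l₁ l₃ d) (he : IsFSup c d e) :
    ∀ s : S, b s = e s := by
  obtain ⟨hb_fun, hb_le₁, hb_le_a, hb_max⟩ := hb
  obtain ⟨he_fun, hce, hde, he_min⟩ := he
  have hb_le_e : b ≤ e :=
    le_of_le_of_le_supConv hS h₁ h₂ h₃ hc hd hb_fun he_fun hb_le₁
      (le_trans hb_le_a (ha.le_supConv hS h₂ h₃)) hce hde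
  obtain ⟨-, h₂a, h₃a, -⟩ := ha
  obtain ⟨hc_fun, hc_le₁, hc_le₂, -⟩ := hc
  obtain ⟨hd_fun, hd_le₁, hd_le₃, -⟩ := hd
  have hcb : c ≤ b := hb_max c hc_fun hc_le₁ fun s => (hc_le₂ s).trans (h₂a s)
  have hdb : d ≤ b := hb_max d hd_fun hd_le₁ fun s => (hd_le₃ s).trans (h₃a s)
  exact fun s => le_antisymm (hb_le_e s) (he_min b hb_fun hcb hdb s)
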